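/- For every n ≥ 2 and all 1 ≤ p < q ≤ n, the set E_{p,q} of edges of the associahedron graph K_n between the oriented classes Θ_{T_p} and Θ_{T_q} is a nonempty matching (no two of its edges share an endpoint), and its cardinality equals C_{p−1}·C_{q−p−1}·C_{n−q}, the number of vertices of the Cartesian product K_{p−1} □ K_{q−p−1} □ K_{n−q}. -/

import Mathlib

open Finset

/-- `x` lies strictly between `a` and `b` in cyclic (counterclockwise) order
on the vertices `0, 1, …, m-1` of a convex `m`-gon. -/
def CycBtw {m : ℕ} (a b x : Fin m) : Prop :=
  0 < (x - a).val ∧ (x - a).val < (b - a).val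

/-- `a` and `b` are adjacent (cyclically consecutive) vertices of the convex `m`-gon. -/
def PolyAdj {m : ℕ} (a b : Fin m) : Prop :=
  (b - a).val = 1 ∨ (a - b).val = 1

/-- `e` is a side of the convex `m`-gon. -/
def IsSide {m : ℕ} (e : Sym2 (Fin m)) : Prop :=
  ∃ a b : Fin m, e = s(a, b) ∧ PolyAdj a b

/-- `e` is a diagonal of the convex `m`-gon: a pair of distinct non-adjacent vertices. -/
def IsDiagonal {m : ℕ} (e : Sym2 (Fin m)) : Prop :=
  ¬ e.IsDiag ∧ ∀ a b : Fin m, e = s(a, b) → ¬ PolyAdj a b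

/-- Two chords cross iff exactly one endpoint of one lies strictly between the
endpoints of the other (for every representation of the endpoints). -/
def Crosses {m : ℕ} (e f : Sym2 (Fin m)) : Prop :=
  ∀ a b : Fin m, e = s(a, b) →
    ∃ c d : Fin m, f = s(c, d) ∧ Xor' (CycBtw a b c) (CycBtw a b d)

/-- A triangulation of the convex `(n+2)`-gon: a maximal set of pairwise
non-crossing diagonals. -/
def IsTriangulation (n : ℕ) (t : Finset (Sym2 (Fin (n + 2)))) : Prop :=
  (∀ e ∈ t, IsDiagonal e) ∧
  (∀ e ∈ t, ∀ f ∈ t, ¬ Crosses e f) ∧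
  (∀ e, IsDiagonal e → (∀ f ∈ t, ¬ Crosses e f) → e ∈ t)

/-- The type of triangulations of the convex `(n+2)`-gon. -/
def Triangulation (n : ℕ) : Type :=
  {t : Finset (Sym2 (Fin (n + 2))) // IsTriangulation n t}

instance (n : ℕ) : DecidableEq (Triangulation n) := fun a b =>
  decidable_of_iff (a.val = b.val) Subtype.ext_iff.symm

noncomputable instance (n : ℕ) : Fintype (Triangulation n) := by
  classical exact Subtype.fintype _

/-- The associahedron graph `K_n`: vertices are the triangulations of the convex
`(n+2)`-gon, with an edge between two triangulations iff they differ in exactly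
one diagonal (a flip). -/
def assocGraph (n : ℕ) : SimpleGraph (Triangulation n) where
  Adj s t := (s.val \ t.val).card = 1 ∧ (t.val \ s.val).card = 1
  symm := ⟨fun s t h => ⟨h.2, h.1⟩⟩
  loopless := ⟨fun s h => by simp at h⟩

/-- The set of edges of `G` with exactly one endpoint in `S`. -/
def edgeBoundary {V : Type*} (G : SimpleGraph V) (S : Set V) : Set (Sym2 V) :=
  {e | e ∈ G.edgeSet ∧ ∃ u v : V, e = s(u, v) ∧ u ∈ S ∧ v ∉ S}

/-- `e` is an edge of the triangulation `t`: a side of the polygon or one of the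
diagonals of `t`. -/
def EdgeOfT {n : ℕ} (t : Triangulation n) (e : Sym2 (Fin (n + 2))) : Prop :=
  IsSide e ∨ e ∈ t.val

/-- The triangle with vertices `a`, `b`, `c` is one of the `n` triangles of the
triangulation `t` (for pairwise non-crossing sets of diagonals this holds exactly
when all three chords are edges of `t`). -/
def IsTriangleOf {n : ℕ} (t : Triangulation n) (a b c : Fin (n + 2)) : Prop :=
  a ≠ b ∧ b ≠ c ∧ a ≠ c ∧ EdgeOfT t s(a, b) ∧ EdgeOfT t s(b, c) ∧ EdgeOfT t s(a, c)

open scoped Fin.NatCast in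
/-- The oriented class `Θ_{T_p}` (w.r.t. the special side `e* = {0, n+1}`): the set of
triangulations of the convex `(n+2)`-gon having the triangle `T_p = {0, p, n+1}` as one of
their triangles. -/
def orientedClass (n p : ℕ) : Set (Triangulation n) :=
  {t | IsTriangleOf t (0 : Fin (n + 2)) ((p : ℕ) : Fin (n + 2)) (((n + 1 : ℕ)) : Fin (n + 2))}

/-- The set `E_{p,q}` of edges of `K_n` with one endpoint in `Θ_{T_p}` and the other
in `Θ_{T_q}`. -/
def edgesBetween (n p q : ℕ) : Set (Sym2 (Triangulation n)) :=
  {e | e ∈ (assocGraph n).edgeSet ∧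
    ∃ u v : Triangulation n, e = s(u, v) ∧ u ∈ orientedClass n p ∧ v ∈ orientedClass n q}

/-- The boundary set `∂_{p,q}`: triangulations in `Θ_{T_p}` having a neighbor in
`Θ_{T_q}`. -/
def boundarySet (n p q : ℕ) : Set (Triangulation n) :=
  {t | t ∈ orientedClass n p ∧
    ∃ t' : Triangulation n, t' ∈ orientedClass n q ∧ (assocGraph n).Adj t t'}


def Cr (e f : ℕ × ℕ) : Prop :=
  (e.1 < f.1 ∧ f.1 < e.2 ∧ e.2 < f.2) ∨ (f.1 < e.1 ∧ e.1 < f.2 ∧ f.2 < e.2)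

def InI (a b : ℕ) (e : ℕ × ℕ) : Prop := a ≤ e.1 ∧ e.1 < e.2 ∧ e.2 ≤ b

def IsT (a b : ℕ) (t : Finset (ℕ × ℕ)) : Prop :=
  (∀ e ∈ t, InI a b e) ∧ (∀ e ∈ t, ∀ f ∈ t, ¬ Cr e f) ∧
  (∀ e, InI a b e → (∀ f ∈ t, ¬ Cr e f) → e ∈ t)

instance (a b : ℕ) : DecidablePred (InI a b) := fun e => by unfold InI; infer_instance

def restr (a b : ℕ) (t : Finset (ℕ × ℕ)) : Finset (ℕ × ℕ) := t.filter (InI a b)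

def glue (a b : ℕ) (s t : Finset (ℕ × ℕ)) : Finset (ℕ × ℕ) := insert (a, b) (s ∪ t)

lemma IsT.base {a b t} (h : IsT a b t) (hab : a < b) : (a, b) ∈ t := by
  refine h.2.2 _ ⟨le_rfl, hab, le_rfl⟩ fun f hf => ?_
  have := h.1 f hf
  simp only [InI, Cr] at *
  omega

lemma IsT.side {a b t} (h : IsT a b t) {i : ℕ} (hi : a ≤ i) (hib : i < b) : (i, i+1) ∈ t := by
  refine h.2.2 _ ⟨hi, by simp, hib⟩ fun f hf => ?_
  have := h.1 f hf
  simp only [InI, Cr] at *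
  omega

lemma IsT.restr {a b t} (h : IsT a b t) {i j : ℕ} (hij : (i, j) ∈ t) : IsT i j (restr i j t) := by
  refine ⟨fun e he => (mem_filter.1 he).2, fun e he f hf =>
    h.2.1 e (mem_filter.1 he).1 f (mem_filter.1 hf).1, fun e he H => ?_⟩
  refine mem_filter.2 ⟨h.2.2 e ?_ fun f hf hc => ?_, he⟩
  · have := h.1 _ hij
    simp only [InI] at *
    omega
  · by_cases hI : InI i j f
    · exact H f (mem_filter.2 ⟨hf, hI⟩) hc
    · have h1 := h.2.1 _ hij f hf
      have h2 := h.1 f hf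
      simp only [InI, Cr] at *
      omega

lemma IsT.split {a m b t} (h : IsT a b t) (h1 : (a, m) ∈ t) (h2 : (m, b) ∈ t) :
    t = glue a b (_root_.restr a m t) (_root_.restr m b t) := by
  ext e
  simp only [glue, mem_insert, mem_union, _root_.restr, mem_filter]
  have ha := h.1 _ h1
  have hb := h.1 _ h2
  constructor
  · intro he
    have c1 := h.2.1 _ h1 _ he
    have c2 := h.2.1 _ h2 _ he
    have c3 := h.1 _ he
    simp only [he, true_and, Prod.ext_iff]
    simp only [InI, Cr] at *
    omega
  · rintro (rfl | he | he)
    · apply h.base; simp only [InI] at *; omega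
    · exact he.1
    · exact he.1

lemma isT_glue {a m b s t} (h1 : IsT a m s) (h2 : IsT m b t) (ham : a < m) (hmb : m < b) :
    IsT a b (glue a b s t) := by
  refine ⟨fun e he => ?_, fun e he f hf => ?_, fun e he H => ?_⟩
  · simp only [glue, mem_insert, mem_union] at he
    rcases he with rfl | he | he
    · simp only [InI]; omega
    · have := h1.1 _ he; simp only [InI] at *; omega
    · have := h2.1 _ he; simp only [InI] at *; omega
  · simp only [glue, mem_insert, mem_union] at he hf
    rcases he with rfl | he | he <;> rcases hf with rfl | hf | hf
    · simp only [Cr]; omega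
    · have := h1.1 _ hf; simp only [InI, Cr] at *; omega
    · have := h2.1 _ hf; simp only [InI, Cr] at *; omega
    · have := h1.1 _ he; simp only [InI, Cr] at *; omega
    · exact h1.2.1 _ he _ hf
    · have := h1.1 _ he; have := h2.1 _ hf; simp only [InI, Cr] at *; omega
    · have := h2.1 _ he; simp only [InI, Cr] at *; omega
    · have := h2.1 _ he; have := h1.1 _ hf; simp only [InI, Cr] at *; omega
    · exact h2.2.1 _ he _ hf
  · simp only [glue, mem_insert, mem_union] at H ⊢
    by_cases e1 : InI a m e
    · exact Or.inr (Or.inl (h1.2.2 e e1 fun f hf => H f (by simp [hf])))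
    by_cases e2 : InI m b e
    · exact Or.inr (Or.inr (h2.2.2 e e2 fun f hf => H f (by simp [hf])))
    have c1 := H _ (Or.inr (Or.inl (h1.base ham)))
    have c2 := H _ (Or.inr (Or.inr (h2.base hmb)))
    left
    rw [Prod.ext_iff]
    simp only [InI, Cr] at *
    omega

lemma restr_glue_left {a m b s t} (h1 : IsT a m s) (h2 : IsT m b t) (hmb : m < b) :
    restr a m (glue a b s t) = s := by
  ext e
  simp only [glue, mem_insert, mem_union, restr, mem_filter]
  constructor
  · rintro ⟨rfl | he | he, hI⟩
    · simp only [InI] at *; omega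
    · exact he
    · have := h2.1 _ he; simp only [InI] at *; omega
  · exact fun he => ⟨Or.inr (Or.inl he), h1.1 _ he⟩

lemma restr_glue_right {a m b s t} (h1 : IsT a m s) (h2 : IsT m b t) (ham : a < m) :
    restr m b (glue a b s t) = t := by
  ext e
  simp only [glue, mem_insert, mem_union, restr, mem_filter]
  constructor
  · rintro ⟨rfl | he | he, hI⟩
    · simp only [InI] at *; omega
    · have := h1.1 _ he; simp only [InI] at *; omega
    · exact he
  · exact fun he => ⟨Or.inr (Or.inr he), h2.1 _ he⟩

lemma IsT.exists_mid {a b t} (h : IsT a b t) (hab : a + 1 < b) :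
    ∃ m, a < m ∧ m < b ∧ (a, m) ∈ t ∧ (m, b) ∈ t := by
  classical
  let S := (range b).filter (fun j => (a, j) ∈ t)
  have hS : S.Nonempty := ⟨a+1, by simp [S, hab, h.side le_rfl (by omega : a < b)]⟩
  obtain ⟨m, hm, hmax⟩ : ∃ m ∈ S, ∀ j ∈ S, j ≤ m := ⟨_, S.max'_mem hS, fun j hj => S.le_max' j hj⟩
  simp only [S, mem_filter, mem_range] at hm hmax
  have hI := h.1 _ hm.2
  refine ⟨m, hI.2.1, hm.1, hm.2, h.2.2 _ ⟨hI.1.trans hI.2.1.le, hm.1, le_rfl⟩ ?_⟩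
  rintro ⟨k, l⟩ hf hc
  have h1 := h.2.1 _ hm.2 _ hf
  have h2 := h.1 _ hf
  by_cases hk : k = a
  · have hf' : (a, l) ∈ t := hk ▸ hf
    simp only [InI, Cr] at *
    have := hmax l ⟨by omega, hf'⟩
    omega
  · simp only [InI, Cr] at *
    omega

lemma IsT.mid_unique {a b t} (h : IsT a b t) {m m' : ℕ} (h1 : (a, m) ∈ t) (h2 : (m, b) ∈ t)
    (h1' : (a, m') ∈ t) (h2' : (m', b) ∈ t) : m = m' := by
  have c1 := h.2.1 _ h2 _ h1'
  have c2 := h.2.1 _ h1 _ h2'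
  have := h.1 _ h1
  have := h.1 _ h2
  have := h.1 _ h1'
  have := h.1 _ h2'
  simp only [InI, Cr] at *
  omega

open Classical in
noncomputable def TT (a b : ℕ) : Finset (Finset (ℕ × ℕ)) :=
  ((range (b+1) ×ˢ range (b+1)).powerset).filter (IsT a b)

lemma mem_TT {a b t} : t ∈ TT a b ↔ IsT a b t := by
  simp only [TT, mem_filter, mem_powerset, and_iff_right_iff_imp]
  intro h e he
  have := h.1 e he
  simp only [InI, mem_product, mem_range] at *
  omega

lemma card_TT (d : ℕ) : ∀ a b, b = a + d + 1 → (TT a b).card = catalan d := by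
  induction d using Nat.strong_induction_on with
  | _ d ih =>
  rcases d with _ | d
  · rintro a b rfl
    rw [catalan_zero, card_eq_one]
    refine ⟨{(a, a+1)}, ?_⟩
    ext t
    rw [mem_TT, mem_singleton]
    constructor
    · intro h
      ext e
      rw [mem_singleton]
      constructor
      · intro he
        have := h.1 e he
        rw [Prod.ext_iff]
        simp only [InI] at *
        omega
      · rintro rfl
        exact h.base (by omega)
    · rintro rfl
      refine ⟨?_, ?_, ?_⟩ <;> simp only [mem_singleton, InI, Cr, Prod.ext_iff]
      all_goals intros; omega
  · rintro a b hb
    rw [catalan_succ']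
    have : (TT a b).card = ((antidiagonal d).sigma
        (fun x => TT a (a + x.1 + 1) ×ˢ TT (a + x.1 + 1) b)).card := by
      symm
      refine card_bij (fun x _ => glue a b x.2.1 x.2.2) ?_ ?_ ?_
      · rintro ⟨⟨i, j⟩, s, t⟩ h
        simp only [mem_sigma, mem_product, HasAntidiagonal.mem_antidiagonal, mem_TT] at h ⊢
        exact isT_glue h.2.1 h.2.2 (by omega) (by omega)
      · rintro ⟨⟨i, j⟩, s, t⟩ h ⟨⟨i', j'⟩, s', t'⟩ h' he
        simp only [mem_sigma, mem_product, HasAntidiagonal.mem_antidiagonal, mem_TT] at h h' he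
        have hg := isT_glue h.2.1 h.2.2 (by omega) (by omega)
        have e1 : a + i + 1 = a + i' + 1 := by
          apply hg.mid_unique
          · simp [glue, h.2.1.base (by omega : a < a + i + 1)]
          · simp [glue, h.2.2.base (by omega : a + i + 1 < b)]
          · rw [he]; simp [glue, h'.2.1.base (by omega : a < a + i' + 1)]
          · rw [he]; simp [glue, h'.2.2.base (by omega : a + i' + 1 < b)]
        obtain rfl : i = i' := by omega
        obtain rfl : j = j' := by omega
        have l1 := restr_glue_left h.2.1 h.2.2 (by omega)
        have l2 := restr_glue_right h.2.1 h.2.2 (by omega)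
        rw [he, restr_glue_left h'.2.1 h'.2.2 (by omega)] at l1
        rw [he, restr_glue_right h'.2.1 h'.2.2 (by omega)] at l2
        rw [l1, l2]
      · intro t ht
        rw [mem_TT] at ht
        obtain ⟨m, h1, h2, h3, h4⟩ := ht.exists_mid (by omega)
        obtain ⟨i, rfl⟩ : ∃ i, m = a + i + 1 := ⟨m - a - 1, by omega⟩
        refine ⟨⟨(i, d - i), restr a (a+i+1) t, restr (a+i+1) b t⟩, ?_, (ht.split h3 h4).symm⟩
        simp only [mem_sigma, mem_product, HasAntidiagonal.mem_antidiagonal, mem_TT]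
        exact ⟨by omega, ht.restr h3, ht.restr h4⟩
    rw [this, card_sigma]
    refine sum_congr rfl fun x hx => ?_
    rw [HasAntidiagonal.mem_antidiagonal] at hx
    rw [card_product, ih x.1 (by omega) _ _ rfl, ih x.2 (by omega) _ _ (by omega)]

lemma fin_sub_val {m : ℕ} (a b : Fin m) :
    (a - b).val = if b.val ≤ a.val then a.val - b.val else m + a.val - b.val := by
  have ha := a.2
  have hb := b.2
  rw [Fin.sub_def]
  simp only
  split_ifs with h
  · rw [show m - b.val + a.val = (a.val - b.val) + m by omega, Nat.add_mod_right,
      Nat.mod_eq_of_lt (by omega)]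
  · rw [Nat.mod_eq_of_lt (by omega)]; omega

lemma cycBtw_lt {m : ℕ} {a b : Fin m} (h : a.val < b.val) (x : Fin m) :
    CycBtw a b x ↔ a.val < x.val ∧ x.val < b.val := by
  have := a.2; have := b.2; have := x.2
  simp only [CycBtw, fin_sub_val]
  split_ifs <;> omega

lemma cycBtw_gt {m : ℕ} {a b : Fin m} (h : a.val < b.val) (x : Fin m) :
    CycBtw b a x ↔ x.val < a.val ∨ b.val < x.val := by
  have := a.2; have := b.2; have := x.2
  simp only [CycBtw, fin_sub_val]
  split_ifs <;> omega

lemma crosses_iff' {m : ℕ} {i j k l : Fin m} (hij : i.val < j.val) (hkl : k.val < l.val) :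
    Crosses s(i, j) s(k, l) ↔ Cr (i.val, j.val) (k.val, l.val) := by
  have key : ∀ a b : Fin m, (∃ c d : Fin m, s(k, l) = s(c, d) ∧ Xor' (CycBtw a b c) (CycBtw a b d))
      ↔ Xor' (CycBtw a b k) (CycBtw a b l) := by
    intro a b
    constructor
    · rintro ⟨c, d, h, hx⟩
      rcases Sym2.eq_iff.1 h with ⟨rfl, rfl⟩ | ⟨rfl, rfl⟩
      · exact hx
      · exact hx.symm
    · exact fun h => ⟨k, l, rfl, h⟩
  have : Crosses s(i, j) s(k, l) ↔
      Xor' (CycBtw i j k) (CycBtw i j l) ∧ Xor' (CycBtw j i k) (CycBtw j i l) := by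
    constructor
    · exact fun h => ⟨(key _ _).1 (h i j rfl), (key _ _).1 (h j i Sym2.eq_swap)⟩
    · rintro ⟨h1, h2⟩ a b h
      rcases Sym2.eq_iff.1 h with ⟨rfl, rfl⟩ | ⟨rfl, rfl⟩
      · exact (key _ _).2 h1
      · exact (key _ _).2 h2
  rw [this]
  simp only [cycBtw_lt hij, cycBtw_gt hij, Xor', xor_def, Cr]
  omega

lemma polyAdj_iff' {n : ℕ} {i j : Fin (n + 2)} (hij : i.val < j.val) :
    PolyAdj i j ↔ (j.val = i.val + 1 ∨ (i.val = 0 ∧ j.val = n + 1)) := by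
  have := i.2; have := j.2
  simp only [PolyAdj, fin_sub_val]
  split_ifs <;> omega

def mkc (n : ℕ) (e : ℕ × ℕ) : Sym2 (Fin (n + 2)) := s(Fin.ofNat (n + 2) e.1, Fin.ofNat (n + 2) e.2)

def Sd (n : ℕ) (e : ℕ × ℕ) : Prop := e.2 = e.1 + 1 ∨ (e.1 = 0 ∧ e.2 = n + 1)

lemma ofNat_val {n i : ℕ} (h : i ≤ n + 1) : (Fin.ofNat (n + 2) i).val = i := by
  simp only [Fin.val_ofNat]
  exact Nat.mod_eq_of_lt (by omega)

lemma isSide_mkc {n e} (h : InI 0 (n+1) e) : IsSide (mkc n e) ↔ Sd n e := by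
  obtain ⟨_, h1, h2⟩ := h
  have hi := ofNat_val (n := n) (i := e.1) (by omega)
  have hj := ofNat_val h2
  have key := polyAdj_iff' (n := n) (i := Fin.ofNat (n+2) e.1) (j := Fin.ofNat (n+2) e.2)
    (by omega)
  rw [hi, hj] at key
  rw [Sd, ← key]
  constructor
  · rintro ⟨a, b, h, hp⟩
    rcases Sym2.eq_iff.1 h with ⟨h1, h2⟩ | ⟨h1, h2⟩
    · rw [h1, h2]; exact hp
    · rw [h1, h2]; exact hp.symm
  · exact fun h => ⟨_, _, rfl, h⟩

lemma isDiagonal_mkc {n e} (h : InI 0 (n+1) e) : IsDiagonal (mkc n e) ↔ ¬ Sd n e := by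
  rw [← isSide_mkc h]
  obtain ⟨_, h1, h2⟩ := h
  have hi := ofNat_val (n := n) (i := e.1) (by omega)
  have hj := ofNat_val h2
  constructor
  · rintro ⟨_, h⟩ ⟨a, b, hab, hp⟩
    exact h a b hab hp
  · intro h
    refine ⟨?_, fun a b hab hp => h ⟨a, b, hab, hp⟩⟩
    rw [mkc, Sym2.mk_isDiag_iff]
    intro h
    rw [h] at hi
    omega

lemma crosses_mkc {n e f} (h : InI 0 (n+1) e) (h' : InI 0 (n+1) f) :
    Crosses (mkc n e) (mkc n f) ↔ Cr e f := by
  obtain ⟨_, h1, h2⟩ := h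
  obtain ⟨_, h1', h2'⟩ := h'
  have hi := ofNat_val (n := n) (i := e.1) (by omega)
  have hj := ofNat_val h2
  have hi' := ofNat_val (n := n) (i := f.1) (by omega)
  have hj' := ofNat_val h2'
  rw [mkc, mkc, crosses_iff' (by omega) (by omega), hi, hj, hi', hj']

lemma mkc_inj {n e f} (h : InI 0 (n+1) e) (h' : InI 0 (n+1) f) (heq : mkc n e = mkc n f) :
    e = f := by
  obtain ⟨_, h1, h2⟩ := h
  obtain ⟨_, h1', h2'⟩ := h'
  have hi := ofNat_val (n := n) (i := e.1) (by omega)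
  have hj := ofNat_val h2
  have hi' := ofNat_val (n := n) (i := f.1) (by omega)
  have hj' := ofNat_val h2'
  rw [Prod.ext_iff]
  rcases Sym2.eq_iff.1 heq with ⟨h1, h2⟩ | ⟨h1, h2⟩
  · rw [h1] at hi; rw [h2] at hj; omega
  · rw [h1] at hi; rw [h2] at hj; omega

lemma exists_mkc {n} (e : Sym2 (Fin (n + 2))) (h : IsDiagonal e) :
    ∃ c, InI 0 (n+1) c ∧ mkc n c = e := by
  induction e using Sym2.ind with
  | _ a b =>
  have hab : a ≠ b := fun hh => h.1 (by simp [hh])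
  have hv : a.val ≠ b.val := fun hh => hab (Fin.ext hh)
  have := a.2; have := b.2
  rcases lt_or_gt_of_ne hv with hl | hl
  · refine ⟨(a.val, b.val), ⟨by simp, hl, by simp only; omega⟩, ?_⟩
    simp [mkc]
  · refine ⟨(b.val, a.val), ⟨by simp, hl, by simp only; omega⟩, ?_⟩
    simp [mkc, Sym2.eq_swap]

open Classical in
noncomputable def FF {n : ℕ} (t : Triangulation n) : Finset (ℕ × ℕ) :=
  (range (n+2) ×ˢ range (n+2)).filter (fun e => InI 0 (n+1) e ∧ EdgeOfT t (mkc n e))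

lemma mem_FF {n} {t : Triangulation n} {e} :
    e ∈ FF t ↔ InI 0 (n+1) e ∧ (Sd n e ∨ mkc n e ∈ t.val) := by
  classical
  rw [FF, mem_filter]
  simp only [mem_product, mem_range, EdgeOfT]
  constructor
  · rintro ⟨_, h, h'⟩
    exact ⟨h, by rwa [isSide_mkc h] at h'⟩
  · rintro ⟨h, h'⟩
    refine ⟨by simp only [InI] at h; omega, h, by rwa [isSide_mkc h]⟩

lemma not_cr_sd {n e f} (h : InI 0 (n+1) e) (h' : InI 0 (n+1) f) (hs : Sd n e) :
    ¬ Cr e f ∧ ¬ Cr f e := by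
  simp only [InI, Sd, Cr] at *
  omega

lemma isT_FF {n} (t : Triangulation n) : IsT 0 (n+1) (FF t) := by
  obtain ⟨td, tc, tm⟩ := t.2
  refine ⟨fun e he => (mem_FF.1 he).1, fun e he f hf => ?_, fun e he H => ?_⟩
  · rw [mem_FF] at he hf
    rcases he.2 with h | h
    · exact (not_cr_sd he.1 hf.1 h).1
    rcases hf.2 with h' | h'
    · exact (not_cr_sd hf.1 he.1 h').2
    rw [← crosses_mkc he.1 hf.1]
    exact tc _ h _ h'
  · rw [mem_FF]
    refine ⟨he, ?_⟩
    by_cases hs : Sd n e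
    · exact Or.inl hs
    right
    refine tm _ ((isDiagonal_mkc he).2 hs) fun f hf => ?_
    obtain ⟨c, hc, rfl⟩ := exists_mkc f (td f hf)
    rw [crosses_mkc he hc]
    exact H c (mem_FF.2 ⟨hc, Or.inr hf⟩)

lemma mem_val_iff {n} (t : Triangulation n) (e) :
    e ∈ t.val ↔ ∃ c ∈ FF t, ¬ Sd n c ∧ mkc n c = e := by
  constructor
  · intro h
    have hd := t.2.1 e h
    obtain ⟨c, hc, rfl⟩ := exists_mkc e hd
    exact ⟨c, mem_FF.2 ⟨hc, Or.inr h⟩, (isDiagonal_mkc hc).1 hd, rfl⟩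
  · rintro ⟨c, hc, hs, rfl⟩
    exact (mem_FF.1 hc).2.resolve_left hs

lemma FF_inj {n} {s t : Triangulation n} (h : FF s = FF t) : s = t := by
  apply Subtype.ext
  ext e
  rw [mem_val_iff, mem_val_iff, h]

lemma FF_surj {n τ} (h : IsT 0 (n+1) τ) : ∃ t : Triangulation n, FF t = τ := by
  classical
  let v : Finset (Sym2 (Fin (n + 2))) := (τ.filter (fun c => ¬ Sd n c)).image (mkc n)
  have hv : ∀ c, InI 0 (n+1) c → (mkc n c ∈ v ↔ c ∈ τ ∧ ¬ Sd n c) := by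
    intro c hc
    simp only [v, mem_image, mem_filter]
    constructor
    · rintro ⟨d, ⟨hd, hs⟩, he⟩
      obtain rfl := mkc_inj (h.1 d hd) hc he
      exact ⟨hd, hs⟩
    · exact fun h => ⟨c, h, rfl⟩
  have hv2 : ∀ e ∈ v, ∃ c ∈ τ, ¬ Sd n c ∧ mkc n c = e := by
    intro e he
    simp only [v, mem_image, mem_filter] at he
    obtain ⟨d, ⟨hd, hs⟩, he⟩ := he
    exact ⟨d, hd, hs, he⟩
  have hT : IsTriangulation n v := by
    refine ⟨fun e he => ?_, fun e he f hf => ?_, fun e he H => ?_⟩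
    · obtain ⟨c, hc, hs, rfl⟩ := hv2 e he
      exact (isDiagonal_mkc (h.1 c hc)).2 hs
    · obtain ⟨c, hc, hs, rfl⟩ := hv2 e he
      obtain ⟨d, hd, hs', rfl⟩ := hv2 f hf
      rw [crosses_mkc (h.1 c hc) (h.1 d hd)]
      exact h.2.1 _ hc _ hd
    · obtain ⟨c, hc, rfl⟩ := exists_mkc e he
      have hs := (isDiagonal_mkc hc).1 he
      rw [hv c hc]
      refine ⟨h.2.2 c hc fun f hf => ?_, hs⟩
      by_cases hsf : Sd n f
      · exact (not_cr_sd (h.1 f hf) hc hsf).2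
      · rw [← crosses_mkc hc (h.1 f hf)]
        exact H _ ((hv f (h.1 f hf)).2 ⟨hf, hsf⟩)
  obtain ⟨T, hTv⟩ : ∃ T : Triangulation n, T.val = v := ⟨⟨v, hT⟩, rfl⟩
  refine ⟨T, ?_⟩
  ext c
  rw [mem_FF, hTv]
  constructor
  · rintro ⟨hc, hs | hm⟩
    · exact h.2.2 c hc fun f hf => (not_cr_sd hc (h.1 f hf) hs).1
    · exact ((hv c hc).1 hm).1
  · intro hc
    refine ⟨h.1 c hc, ?_⟩
    by_cases hs : Sd n c
    · exact Or.inl hs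
    · exact Or.inr ((hv c (h.1 c hc)).2 ⟨hc, hs⟩)

lemma card_sdiff_FF {n} (s t : Triangulation n) : (s.val \ t.val).card = (FF s \ FF t).card := by
  symm
  refine card_bij (fun c _ => mkc n c) ?_ ?_ ?_
  · intro c hc
    simp only [mem_sdiff, mem_FF] at hc ⊢
    tauto
  · intro c hc d hd h
    simp only [mem_sdiff, mem_FF] at hc hd
    exact mkc_inj hc.1.1 hd.1.1 h
  · intro e he
    rw [mem_sdiff, mem_val_iff] at he
    obtain ⟨⟨c, hc, hs, rfl⟩, hn⟩ := he
    refine ⟨c, ?_, rfl⟩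
    rw [mem_sdiff]
    refine ⟨hc, fun h => hn ?_⟩
    exact (mem_FF.1 h).2.resolve_left hs

lemma adj_iff {n} (s t : Triangulation n) :
    (assocGraph n).Adj s t ↔ (FF s \ FF t).card = 1 ∧ (FF t \ FF s).card = 1 := by
  rw [← card_sdiff_FF, ← card_sdiff_FF]; rfl

lemma mem_class {n p} (hp : 1 ≤ p) (hpn : p ≤ n) (t : Triangulation n) :
    t ∈ orientedClass n p ↔ (0, p) ∈ FF t ∧ (p, n+1) ∈ FF t := by
  have e : ∀ c, InI 0 (n+1) c → (c ∈ FF t ↔ EdgeOfT t (mkc n c)) := by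
    intro c hc
    rw [mem_FF, EdgeOfT, isSide_mkc hc]
    tauto
  have i1 : InI 0 (n+1) (0, p) := by simp only [InI]; omega
  have i2 : InI 0 (n+1) (p, n+1) := by simp only [InI]; omega
  have i3 : InI 0 (n+1) (0, n+1) := by simp only [InI]; omega
  have h3 := (e _ i3).1 ((isT_FF t).base (by omega))
  rw [e _ i1, e _ i2]
  have hz := ofNat_val (n := n) (i := 0) (by omega)
  have hp' := ofNat_val (n := n) (i := p) (by omega)
  have hn' := ofNat_val (n := n) (i := n+1) le_rfl
  constructor
  · rintro ⟨_, _, _, h1, h2, _⟩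
    exact ⟨h1, h2⟩
  · rintro ⟨h1, h2⟩
    refine ⟨?_, ?_, ?_, h1, h2, h3⟩
    · intro h
      have := congrArg Fin.val h
      change (Fin.ofNat (n+2) 0).val = (Fin.ofNat (n+2) p).val at this
      omega
    · intro h
      have := congrArg Fin.val h
      change (Fin.ofNat (n+2) p).val = (Fin.ofNat (n+2) (n+1)).val at this
      omega
    · intro h
      have := congrArg Fin.val h
      change (Fin.ofNat (n+2) 0).val = (Fin.ofNat (n+2) (n+1)).val at this
      omega

/-- The union of three triangulated pieces, glued in the way belonging to `T_p`. -/
def gU (p N : ℕ) (x : Finset (ℕ × ℕ) × Finset (ℕ × ℕ) × Finset (ℕ × ℕ)) : Finset (ℕ × ℕ) :=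
  glue 0 N x.1 (glue p N x.2.1 x.2.2)

/-- The union of three triangulated pieces, glued in the way belonging to `T_q`. -/
def gV (q N : ℕ) (x : Finset (ℕ × ℕ) × Finset (ℕ × ℕ) × Finset (ℕ × ℕ)) : Finset (ℕ × ℕ) :=
  glue 0 N (glue 0 q x.1 x.2.1) x.2.2

lemma sdiff_UV {p q N x} (hp : 0 < p) (hpq : p < q) (hq : q < N)
    (h1 : IsT 0 p x.1) (h2 : IsT p q x.2.1) (h3 : IsT q N x.2.2) :
    gU p N x \ gV q N x = {(p, N)} ∧ gV q N x \ gU p N x = {(0, q)} := by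
  have n1 : ∀ a b, (a, b) ∈ x.1 → b ≤ p := fun a b h => (h1.1 _ h).2.2
  have n2 : ∀ a b, (a, b) ∈ x.2.1 → p ≤ a ∧ b ≤ q := fun a b h => ⟨(h2.1 _ h).1, (h2.1 _ h).2.2⟩
  have n3 : ∀ a b, (a, b) ∈ x.2.2 → q ≤ a := fun a b h => (h3.1 _ h).1
  have a1 := fun h => n1 p N h
  have a2 := fun h => n2 p N h
  have a3 := fun h => n3 p N h
  have b1 := fun h => n1 0 q h
  have b2 := fun h => n2 0 q h
  have b3 := fun h => n3 0 q h
  constructor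
  · ext e
    simp only [gU, gV, glue, mem_sdiff, mem_insert, mem_union, mem_singleton]
    constructor
    · clear n1 n2 n3 a1 a2 a3 b1 b2 b3 h1 h2 h3
      grind
    · rintro rfl
      refine ⟨by simp, ?_⟩
      simp only [Prod.ext_iff]
      rintro (h | (h | h | h) | h)
      · omega
      · omega
      · have := a1 h; omega
      · have := a2 h; omega
      · have := a3 h; omega
  · ext e
    simp only [gU, gV, glue, mem_sdiff, mem_insert, mem_union, mem_singleton]
    constructor
    · clear n1 n2 n3 a1 a2 a3 b1 b2 b3 h1 h2 h3
      grind
    · rintro rfl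
      refine ⟨by simp, ?_⟩
      simp only [Prod.ext_iff]
      rintro (h | h | h | h | h)
      · omega
      · have := b1 h; omega
      · omega
      · have := b2 h; omega
      · have := b3 h; omega

lemma UV_of_adj {p q N u v} (hp : 0 < p) (hpq : p < q) (hq : q < N)
    (hu : IsT 0 N u) (hv : IsT 0 N v) (u1 : (0, p) ∈ u) (u2 : (p, N) ∈ u)
    (v1 : (0, q) ∈ v) (v2 : (q, N) ∈ v) (c1 : (u \ v).card = 1) (c2 : (v \ u).card = 1) :
    ∃ x : Finset (ℕ × ℕ) × Finset (ℕ × ℕ) × Finset (ℕ × ℕ),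
      IsT 0 p x.1 ∧ IsT p q x.2.1 ∧ IsT q N x.2.2 ∧ u = gU p N x ∧ v = gV q N x := by
  have hpv : (p, N) ∉ v := fun h => hv.2.1 _ v1 _ h (by simp only [Cr]; omega)
  have hqu : (0, q) ∉ u := fun h => hu.2.1 _ h _ u2 (by simp only [Cr]; omega)
  have hmem1 : ∀ e ∈ u, e ≠ (p, N) → e ∈ v := by
    intro e he hne
    by_contra hev
    exact hne (card_le_one.1 c1.le e (by simp [he, hev]) _ (by simp [u2, hpv]))
  have hmem2 : ∀ e ∈ v, e ≠ (0, q) → e ∈ u := by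
    intro e he hne
    by_contra hev
    exact hne (card_le_one.1 c2.le e (by simp [he, hev]) _ (by simp [v1, hqu]))
  have u3 : (q, N) ∈ u := hmem2 _ v2 (by simp [Prod.ext_iff]; omega)
  have v3 : (0, p) ∈ v := hmem1 _ u1 (by simp [Prod.ext_iff]; omega)
  have u4 : (p, q) ∈ u := by
    refine hu.2.2 _ ⟨by omega, hpq, hq.le⟩ fun f hf hc => ?_
    have d1 := hu.2.1 _ u2 _ hf
    have d2 := hu.2.1 _ u1 _ hf
    have d3 := hu.1 _ hf
    by_cases hfe : f = (p, N)
    · subst hfe; simp only [Cr] at hc; omega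
    · have d4 := hv.2.1 _ v1 _ (hmem1 f hf hfe)
      simp only [Cr, InI] at *
      omega
  have v4 : (p, q) ∈ v := hmem1 _ u4 (by simp [Prod.ext_iff]; omega)
  have rr : ∀ (t : Finset (ℕ × ℕ)) (a b c d : ℕ), a ≤ c → d ≤ b →
      restr c d (restr a b t) = restr c d t := by
    intro t a b c d h1 h2
    ext e
    simp only [restr, mem_filter, InI]
    constructor
    · tauto
    · rintro ⟨h, h'⟩; exact ⟨⟨h, by omega⟩, h'⟩
  have ruv : ∀ c d, ¬ InI c d (p, N) → ¬ InI c d (0, q) → restr c d u = restr c d v := by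
    intro c d h1 h2
    ext e
    simp only [restr, mem_filter]
    constructor
    · rintro ⟨h, h'⟩
      exact ⟨hmem1 e h (by rintro rfl; exact h1 h'), h'⟩
    · rintro ⟨h, h'⟩
      exact ⟨hmem2 e h (by rintro rfl; exact h2 h'), h'⟩
  refine ⟨(restr 0 p u, restr p q u, restr q N u), hu.restr u1, hu.restr u4, hu.restr u3, ?_, ?_⟩
  · have s1 := hu.split u1 u2
    have s2 := (hu.restr u2).split (m := q) (by simp [restr, u4, InI]; omega)
      (by simp [restr, u3, InI]; omega)
    rw [rr _ _ _ _ _ (by omega) (by omega), rr _ _ _ _ _ (by omega) (by omega)] at s2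
    rw [s2] at s1
    exact s1
  · have s1 := hv.split v1 v2
    have s2 := (hv.restr v1).split (m := p) (by simp [restr, v3, InI]; omega)
      (by simp [restr, v4, InI]; omega)
    rw [rr _ _ _ _ _ (by omega) (by omega), rr _ _ _ _ _ (by omega) (by omega)] at s2
    rw [s2] at s1
    simp only [gV]
    rw [ruv 0 p, ruv p q, ruv q N]
    · exact s1
    all_goals simp only [InI]; omega

lemma gU_inj {p q N x y} (hp : 0 < p) (hpq : p < q) (hq : q < N)
    (h1 : IsT 0 p x.1) (h2 : IsT p q x.2.1) (h3 : IsT q N x.2.2)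
    (k1 : IsT 0 p y.1) (k2 : IsT p q y.2.1) (k3 : IsT q N y.2.2)
    (h : gU p N x = gU p N y) : x = y := by
  have gx := isT_glue h2 h3 hpq hq
  have gy := isT_glue k2 k3 hpq hq
  have l1 := restr_glue_left h1 gx (by omega)
  have l2 := restr_glue_right h1 gx (by omega)
  simp only [gU] at h
  rw [h, restr_glue_left k1 gy (by omega)] at l1
  rw [h, restr_glue_right k1 gy (by omega)] at l2
  have l3 := restr_glue_left h2 h3 (by omega)
  have l4 := restr_glue_right h2 h3 (by omega)
  rw [← l2, restr_glue_left k2 k3 (by omega)] at l3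
  rw [← l2, restr_glue_right k2 k3 (by omega)] at l4
  ext1
  · exact l1.symm
  · ext1
    · exact l3.symm
    · exact l4.symm

lemma gV_inj {p q N x y} (hp : 0 < p) (hpq : p < q) (hq : q < N)
    (h1 : IsT 0 p x.1) (h2 : IsT p q x.2.1) (h3 : IsT q N x.2.2)
    (k1 : IsT 0 p y.1) (k2 : IsT p q y.2.1) (k3 : IsT q N y.2.2)
    (h : gV q N x = gV q N y) : x = y := by
  have gx := isT_glue h1 h2 hp hpq
  have gy := isT_glue k1 k2 hp hpq
  have l1 := restr_glue_left gx h3 (by omega)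
  have l2 := restr_glue_right gx h3 (by omega)
  simp only [gV] at h
  rw [h, restr_glue_left gy k3 (by omega)] at l1
  rw [h, restr_glue_right gy k3 (by omega)] at l2
  have l3 := restr_glue_left h1 h2 (by omega)
  have l4 := restr_glue_right h1 h2 (by omega)
  rw [← l1, restr_glue_left k1 k2 (by omega)] at l3
  rw [← l1, restr_glue_right k1 k2 (by omega)] at l4
  ext1
  · exact l3.symm
  · ext1
    · exact l4.symm
    · exact l2.symm

lemma catalan_pos' (d : ℕ) : 0 < catalan d := by
  rw [catalan_eq_centralBinom_div]
  exact Nat.div_pos (Nat.le_of_dvd (Nat.centralBinom_pos d) (Nat.succ_dvd_centralBinom d))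
    (by omega)

/-- for every `n ≥ 2` and `1 ≤ p < q ≤ n`, the set `E_{p,q}` of edges of
`K_n` between the oriented classes `Θ_{T_p}` and `Θ_{T_q}` is a nonempty matching, and
its cardinality equals `C_{p-1}·C_{q-p-1}·C_{n-q}`, the number of vertices of
`K_{p-1} □ K_{q-p-1} □ K_{n-q}`. -/
theorem edgesBetween_matching_card (n p q : ℕ) (hn : 2 ≤ n) (hp : 1 ≤ p)
    (hpq : p < q) (hqn : q ≤ n) :
    (edgesBetween n p q).Nonempty ∧
    (∀ e ∈ edgesBetween n p q, ∀ f ∈ edgesBetween n p q,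
      ∀ x : Triangulation n, x ∈ e → x ∈ f → e = f) ∧
    (edgesBetween n p q).ncard = catalan (p - 1) * catalan (q - p - 1) * catalan (n - q) := by
  set N := n + 1 with hN
  have hp0 : 0 < p := hp
  have hqN : q < N := by omega
  -- the description of an edge
  have desc : ∀ e ∈ edgesBetween n p q, ∃ x u v, IsT 0 p x.1 ∧ IsT p q x.2.1 ∧ IsT q N x.2.2 ∧
      e = s(u, v) ∧ FF u = gU p N x ∧ FF v = gV q N x := by
    rintro e ⟨he, u, v, rfl, hu, hv⟩
    rw [SimpleGraph.mem_edgeSet, adj_iff] at he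
    rw [mem_class hp (by omega)] at hu
    rw [mem_class (by omega) hqn] at hv
    obtain ⟨x, h1, h2, h3, h4, h5⟩ := UV_of_adj hp0 hpq hqN (isT_FF u) (isT_FF v) hu.1 hu.2
      hv.1 hv.2 he.1 he.2
    exact ⟨x, u, v, h1, h2, h3, rfl, h4, h5⟩
  have conv : ∀ x u v, IsT 0 p x.1 → IsT p q x.2.1 → IsT q N x.2.2 →
      FF u = gU p N x → FF v = gV q N x → s(u, v) ∈ edgesBetween n p q := by
    intro x u v h1 h2 h3 hu hv
    have hd := sdiff_UV hp0 hpq hqN h1 h2 h3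
    refine ⟨?_, u, v, rfl, ?_, ?_⟩
    · rw [SimpleGraph.mem_edgeSet, adj_iff, hu, hv, hd.1, hd.2]
      simp
    · rw [mem_class hp (by omega), hu]
      simp [gU, glue, h1.base hp0, hN]
    · rw [mem_class (by omega) hqn, hv]
      simp [gV, glue, h3.base hqN, ← hN]
  have ne : ∀ x y, ∀ u : Triangulation n, IsT 0 p x.1 → IsT q N y.2.2 → FF u = gU p N x → FF u ≠ gV q N y := by
    intro x y u h1 h3 h2 h4
    have c1 : (p, N) ∈ FF u := by rw [h2]; simp [gU, glue]
    have c2 : (0, q) ∈ FF u := by rw [h4]; simp [gV, glue]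
    exact (isT_FF u).2.1 _ c2 _ c1 (by simp only [Cr]; omega)
  have ex : ∀ x ∈ TT 0 p ×ˢ TT p q ×ˢ TT q N, ∃ u v : Triangulation n,
      FF u = gU p N x ∧ FF v = gV q N x := by
    intro x hx
    simp only [mem_product, mem_TT] at hx
    obtain ⟨h1, h2, h3⟩ := hx
    obtain ⟨u, hu⟩ := FF_surj (n := n) (τ := gU p N x)
      (isT_glue h1 (isT_glue h2 h3 hpq hqN) hp0 (by omega))
    obtain ⟨v, hv⟩ := FF_surj (n := n) (τ := gV q N x)
      (isT_glue (isT_glue h1 h2 hp0 hpq) h3 (by omega) hqN)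
    exact ⟨u, v, hu, hv⟩
  have hcard : (edgesBetween n p q).ncard =
      catalan (p - 1) * catalan (q - p - 1) * catalan (n - q) := by
    choose f g hf hg using ex
    have : ((TT 0 p ×ˢ TT p q ×ˢ TT q N : Finset _) : Set (Finset (ℕ × ℕ) × Finset (ℕ × ℕ) × Finset (ℕ × ℕ))).ncard = (edgesBetween n p q).ncard := by
      refine Set.ncard_congr (fun x hx => s(f x hx, g x hx)) ?_ ?_ ?_
      · intro x hx
        have hx' := hx
        simp only [mem_coe, mem_product, mem_TT] at hx'
        exact conv x _ _ hx'.1 hx'.2.1 hx'.2.2 (hf x hx) (hg x hx)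
      · intro x y hx hy h
        have hx' := hx
        have hy' := hy
        simp only [mem_coe, mem_product, mem_TT] at hx' hy'
        rcases Sym2.eq_iff.1 h with ⟨h1, h2⟩ | ⟨h1, h2⟩
        · have := hf x hx
          rw [h1, hf y hy] at this
          exact (gU_inj hp0 hpq hqN hy'.1 hy'.2.1 hy'.2.2 hx'.1 hx'.2.1 hx'.2.2 this).symm
        · exact absurd (h1 ▸ hg y hy) (ne x y _ hx'.1 hy'.2.2 (hf x hx))
      · intro e he
        obtain ⟨x, u, v, h1, h2, h3, rfl, hu, hv⟩ := desc e he
        have hx : x ∈ TT 0 p ×ˢ TT p q ×ˢ TT q N := by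
          simp only [mem_product, mem_TT]; exact ⟨h1, h2, h3⟩
        refine ⟨x, hx, ?_⟩
        rw [FF_inj ((hf x hx).trans hu.symm), FF_inj ((hg x hx).trans hv.symm)]
    rw [← this, Set.ncard_coe_finset, card_product, card_product,
      card_TT (p - 1) 0 p (by omega), card_TT (q - p - 1) p q (by omega),
      card_TT (n - q) q N (by omega), mul_assoc]
  refine ⟨?_, ?_, hcard⟩
  · apply Set.nonempty_of_ncard_ne_zero
    rw [hcard]
    have := catalan_pos' (p - 1)
    have := catalan_pos' (q - p - 1)
    have := catalan_pos' (n - q)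
    positivity
  · intro e he f hf z hze hzf
    obtain ⟨x, u, v, h1, h2, h3, rfl, hu, hv⟩ := desc e he
    obtain ⟨y, u', v', k1, k2, k3, rfl, hu', hv'⟩ := desc f hf
    have hxy : x = y := by
      rcases Sym2.mem_iff.1 hze with rfl | rfl <;> rcases Sym2.mem_iff.1 hzf with rfl | rfl
      · exact gU_inj hp0 hpq hqN h1 h2 h3 k1 k2 k3 (hu.symm.trans hu')
      · exact absurd hv' (ne x y _ h1 k3 hu)
      · exact absurd hv (ne y x _ k1 h3 hu')
      · exact gV_inj hp0 hpq hqN h1 h2 h3 k1 k2 k3 (hv.symm.trans hv')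
    subst hxy
    rw [FF_inj (hu.trans hu'.symm), FF_inj (hv.trans hv'.symm)]
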